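/- arXiv:1706.08837 — 2 statements merged into one kernel-verified Lean document; each statement's English description precedes it below -/
import Mathlib

section
/- Let S be a nonempty set of integers, fix s₀ ∈ S, and let d be the greatest common divisor (in the sense of the generated subgroup: d·ℤ is the subgroup of ℤ generated by {s − t : s, t ∈ S}) of all pairwise differences of elements of S. Then the smallest subset of ℤ containing S and closed under the binary operation (x, y) ↦ 2x − y is exactly the coset {s₀ + k·d : k ∈ ℤ}. (When all elements of S are equal, d = 0 and the closure is S itself.) -/
/-!
Work with `d ℤ`, the subgroup generated by the differences of `S`. The coset `s₀ + d ℤ` contains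
`S` and is closed under `(x, y) ↦ 2x - y`, which gives one inclusion.

Conversely, let `C ⊇ S` be closed. Composing two reflections, `2x - (2x' - y) = y + 2(x - x')`, so
`C` is stable under translation by twice any difference of elements of `S`, hence by `2 d ℤ`
(`translate_mem`). This settles even multiples of `d`. For odd multiples it is enough that some
`s ∈ S` is an odd multiple of `d` away from `s₀` (`exists_odd`): otherwise all differences would
lie in `2 d ℤ`, contradicting that they generate `d ℤ` unless `d = 0`.
-/

theorem translate_mem {S C : Set ℤ} (hSC : S ⊆ C) (hC : ∀ x ∈ C, ∀ y ∈ C, 2 * x - y ∈ C)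
    {g : ℤ} (hg : g ∈ AddSubgroup.closure {x : ℤ | ∃ s ∈ S, ∃ t ∈ S, x = s - t}) :
    ∀ y ∈ C, y + 2 * g ∈ C := by
  -- Negatives are carried along in the induction: stability under `y ↦ y + 2g` alone
  -- does not give stability under the inverse translation.
  suffices h : ∀ y ∈ C, y + 2 * g ∈ C ∧ y - 2 * g ∈ C from fun y hy => (h y hy).1
  induction hg using AddSubgroup.closure_induction with
  | mem x hx =>
    obtain ⟨s, hs, t, ht, rfl⟩ := hx
    intro y hy
    have h₁ := hC s (hSC hs) _ (hC t (hSC ht) y hy)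
    have h₂ := hC t (hSC ht) _ (hC s (hSC hs) y hy)
    constructor
    · convert h₁ using 1; ring
    · convert h₂ using 1; ring
  | zero => simp
  | add a b _ _ iha ihb =>
    intro y hy
    constructor
    · convert (ihb _ (iha y hy).1).1 using 1; ring
    · convert (ihb _ (iha y hy).2).2 using 1; ring
  | neg a _ iha =>
    intro y hy
    constructor
    · convert (iha y hy).2 using 1; ring
    · convert (iha y hy).1 using 1; ring

/-- Some element of `S` differs from `s₀` by an odd multiple of `d`; for `d = 0` the multiplier
carries no information and the claim is trivial. -/
theorem exists_odd {S : Set ℤ} {s₀ d : ℤ} (hs₀ : s₀ ∈ S)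
    (hd : AddSubgroup.closure {x : ℤ | ∃ s ∈ S, ∃ t ∈ S, x = s - t} =
      AddSubgroup.zmultiples d) :
    ∃ s ∈ S, ∃ m : ℤ, s = s₀ + (2 * m + 1) * d := by
  by_contra! hno
  have hmul : ∀ s ∈ S, ∃ m : ℤ, s = s₀ + m * (2 * d) := by
    intro s hs
    have hmem : s - s₀ ∈ AddSubgroup.zmultiples d :=
      hd ▸ AddSubgroup.subset_closure ⟨s, hs, s₀, hs₀, rfl⟩
    obtain ⟨k, hk⟩ := Int.mem_zmultiples_iff.mp hmem
    obtain ⟨m, rfl | rfl⟩ := Int.even_or_odd' k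
    · exact ⟨m, by linear_combination hk⟩
    · exact absurd (by linear_combination hk) (hno s hs m)
  have hle : AddSubgroup.zmultiples d ≤ AddSubgroup.zmultiples (2 * d) := by
    rw [← hd, AddSubgroup.closure_le]
    rintro _ ⟨s, hs, t, ht, rfl⟩
    obtain ⟨a, ha⟩ := hmul s hs
    obtain ⟨b, hb⟩ := hmul t ht
    exact Int.mem_zmultiples_iff.mpr ⟨a - b, by linear_combination ha - hb⟩
  obtain ⟨m, hm⟩ := Int.mem_zmultiples_iff.mp (hle (AddSubgroup.mem_zmultiples d))
  have h0 : d * (2 * m - 1) = 0 := by linear_combination -hm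
  rcases mul_eq_zero.mp h0 with h | h
  · exact hno s₀ hs₀ 0 (by simp [h])
  · omega

/-- Let `S` be a nonempty set of integers, `s₀ ∈ S`, and let `d`
generate (as a subgroup of ℤ) the subgroup generated by all pairwise
differences of elements of `S`. Then the smallest subset of ℤ containing `S`
and closed under `(x, y) ↦ 2x - y` is exactly the coset `{s₀ + k*d : k ∈ ℤ}`. -/
theorem min_crossing_closed_set_eq_gcd_coset
    (S : Set ℤ) (hS : S.Nonempty) (s₀ : ℤ) (hs₀ : s₀ ∈ S) (d : ℤ)
    (hd : AddSubgroup.closure {x : ℤ | ∃ s ∈ S, ∃ t ∈ S, x = s - t} =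
      AddSubgroup.zmultiples d) :
    ⋂₀ {C : Set ℤ | S ⊆ C ∧ ∀ x ∈ C, ∀ y ∈ C, 2 * x - y ∈ C} =
      {z : ℤ | ∃ k : ℤ, z = s₀ + k * d} := by
  apply Set.Subset.antisymm
  · apply Set.sInter_subset_of_mem
    constructor
    · intro s hs
      have hmem : s - s₀ ∈ AddSubgroup.zmultiples d :=
        hd ▸ AddSubgroup.subset_closure ⟨s, hs, s₀, hs₀, rfl⟩
      obtain ⟨k, hk⟩ := Int.mem_zmultiples_iff.mp hmem
      exact ⟨k, by linear_combination hk⟩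
    · rintro _ ⟨a, rfl⟩ _ ⟨b, rfl⟩
      exact ⟨2 * a - b, by ring⟩
  · rintro _ ⟨k, rfl⟩ C ⟨hSC, hC⟩
    have htrans : ∀ n : ℤ, ∀ y ∈ C, y + 2 * (n * d) ∈ C := fun n =>
      translate_mem hSC hC (hd ▸ Int.mem_zmultiples_iff.mpr (dvd_mul_left d n))
    obtain ⟨n, rfl | rfl⟩ := Int.even_or_odd' k
    · convert htrans n s₀ (hSC hs₀) using 1; ring
    · obtain ⟨s, hs, m, hm⟩ := exists_odd hs₀ hd
      convert htrans (n - m) s (hSC hs) using 1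
      rw [hm]; ring
end

section
/- Let S be a nonempty set of integers. The smallest subset of ℤ containing S and closed under the binary operation (x, y) ↦ 2x − y equals the set of all integer affine combinations of elements of S, i.e., the set of all finite sums λ₁s₁ + ⋯ + λₖsₖ with s₁, …, sₖ ∈ S, λ₁, …, λₖ ∈ ℤ, and λ₁ + ⋯ + λₖ = 1. -/
/-!
Affine combinations are stable under `(x, y) ↦ 2x - y` (concatenate the two combinations), which
gives one inclusion. For the other, let `C ⊇ S` be closed and fix `s₀ ∈ S`. Composing the
reflections in two points `a, b ∈ C` shows that `C` is invariant under translation by `2(a - b)`,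
hence under `2H`, where `H` is the subgroup generated by the differences `s - s₀`, `s ∈ S`.
Write `H = dℤ`. Either some `s - s₀` is an odd multiple of `d`, and then `s₀` and `s` represent
both classes of `s₀ + H` modulo `2H`; or all are even multiples, which forces `d = 0`. Either way
`s₀ + H ⊆ C`, and `s₀ + H` contains all affine combinations of `S`.
-/

/-- Reflecting in `b` and then in `a` is the translation by `2(a - b)`, so a closed set `C` is
invariant under `2t` for every `t` in a group generated by differences of elements of `C`. -/
lemma translate_mem_of_mem_closure {C T : Set ℤ} (hC : ∀ x ∈ C, ∀ y ∈ C, 2 * x - y ∈ C)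
    (hT : ∀ t ∈ T, ∃ a ∈ C, ∃ b ∈ C, t = a - b) {t : ℤ} (ht : t ∈ AddSubgroup.closure T) :
    ∀ x ∈ C, x + 2 * t ∈ C ∧ x - 2 * t ∈ C := by
  induction ht using AddSubgroup.closure_induction with
  | mem t ht =>
    obtain ⟨a, ha, b, hb, rfl⟩ := hT t ht
    intro x hx
    have h1 := hC a ha _ (hC b hb x hx)
    have h2 := hC b hb _ (hC a ha x hx)
    exact ⟨by convert h1 using 1; ring, by convert h2 using 1; ring⟩
  | zero => simp
  | add u v _ _ hu hv =>
    intro x hx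
    have h1 := (hv _ (hu x hx).1).1
    have h2 := (hv _ (hu x hx).2).2
    exact ⟨by convert h1 using 1; ring, by convert h2 using 1; ring⟩
  | neg u _ hu =>
    intro x hx
    have h := hu x hx
    exact ⟨by convert h.2 using 1; ring, by convert h.1 using 1; ring⟩

/-- A closed set containing `S` contains the coset of `s₀` modulo the group of differences. -/
lemma add_mem_of_mem_closure_differences {S C : Set ℤ} (hSC : S ⊆ C)
    (hC : ∀ x ∈ C, ∀ y ∈ C, 2 * x - y ∈ C) {s₀ : ℤ} (hs₀ : s₀ ∈ S) {t : ℤ}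
    (ht : t ∈ AddSubgroup.closure ((fun s => s - s₀) '' S)) : s₀ + t ∈ C := by
  have htr : ∀ u ∈ AddSubgroup.closure ((fun s => s - s₀) '' S), ∀ x ∈ C, x + 2 * u ∈ C := by
    intro u hu x hx
    refine (translate_mem_of_mem_closure hC ?_ hu x hx).1
    rintro _ ⟨s, hs, rfl⟩
    exact ⟨s, hSC hs, s₀, hSC hs₀, rfl⟩
  have hgen : ∀ s ∈ S, s - s₀ ∈ AddSubgroup.closure ((fun s => s - s₀) '' S) :=
    fun s hs => AddSubgroup.subset_closure ⟨s, hs, rfl⟩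
  obtain ⟨d, hd⟩ := Int.subgroup_cyclic (AddSubgroup.closure ((fun s => s - s₀) '' S))
  rw [← AddSubgroup.zmultiples_eq_closure] at hd
  have hmem : ∀ u, u ∈ AddSubgroup.closure ((fun s => s - s₀) '' S) ↔ d ∣ u := by
    intro u
    rw [hd, Int.mem_zmultiples_iff]
  obtain ⟨n, rfl⟩ := (hmem t).1 ht
  by_cases hodd : ∃ s ∈ S, ∃ m : ℤ, s - s₀ = d * (2 * m + 1)
  · obtain ⟨s, hs, m, hm⟩ := hodd
    rcases Int.even_or_odd' n with ⟨k, rfl | rfl⟩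
    · have h := htr (d * k) ((hmem _).2 ⟨k, rfl⟩) s₀ (hSC hs₀)
      convert h using 1; ring
    · have h := htr (d * (k - m)) ((hmem _).2 ⟨_, rfl⟩) s (hSC hs)
      convert h using 1
      linear_combination -hm
  · -- All differences lie in `2dℤ`, so `2d ∣ d` and `d = 0`.
    have hle : AddSubgroup.closure ((fun s => s - s₀) '' S) ≤ AddSubgroup.zmultiples (2 * d) := by
      rw [AddSubgroup.closure_le]
      rintro _ ⟨s, hs, rfl⟩
      obtain ⟨j, hj⟩ := (hmem _).1 (hgen s hs)
      rcases Int.even_or_odd' j with ⟨k, rfl | rfl⟩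
      · refine Int.mem_zmultiples_iff.2 ⟨k, ?_⟩
        linear_combination hj
      · exact absurd ⟨s, hs, k, hj⟩ hodd
    obtain ⟨c, hc⟩ := Int.mem_zmultiples_iff.1 (hle ((hmem d).2 dvd_rfl))
    have hd0 : d = 0 := by
      have h : d * (1 - 2 * c) = 0 := by linear_combination hc
      rcases mul_eq_zero.1 h with h | h
      · exact h
      · omega
    simpa [hd0] using hSC hs₀


/-- For a nonempty set `S` of integers, the smallest subset of ℤ
containing `S` and closed under `(x, y) ↦ 2x - y` equals the set of all integer
affine combinations of elements of `S` (finite sums `∑ λᵢ sᵢ` with `sᵢ ∈ S`,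
`λᵢ ∈ ℤ`, and `∑ λᵢ = 1`). -/
theorem min_crossing_closed_set_eq_affine_combinations
    (S : Set ℤ) (hS : S.Nonempty) :
    ⋂₀ {C : Set ℤ | S ⊆ C ∧ ∀ x ∈ C, ∀ y ∈ C, 2 * x - y ∈ C} =
      {z : ℤ | ∃ (k : ℕ) (s : Fin k → ℤ) (l : Fin k → ℤ),
        (∀ i, s i ∈ S) ∧ (∑ i, l i) = 1 ∧ z = ∑ i, l i * s i} := by
  apply Set.Subset.antisymm
  · apply Set.sInter_subset_of_mem
    refine ⟨fun s hs => ⟨1, fun _ => s, fun _ => 1, fun _ => hs, by simp, by simp⟩, ?_⟩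
    rintro x ⟨k, s, l, hs, hl, rfl⟩ y ⟨k', s', l', hs', hl', rfl⟩
    refine ⟨k + k', Fin.append s s', Fin.append (fun i => 2 * l i) (fun i => -l' i), ?_, ?_, ?_⟩
    · intro i
      induction i using Fin.addCases with
      | left i => simpa using hs i
      | right i => simpa using hs' i
    · simp [Fin.sum_univ_add, ← Finset.mul_sum, hl, hl']
    · simp [Fin.sum_univ_add, Finset.mul_sum, mul_assoc, sub_eq_add_neg]
  · rintro z ⟨k, s, l, hs, hl, rfl⟩ C ⟨hSC, hC⟩
    obtain ⟨s₀, hs₀⟩ := hS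
    have ht : ∑ i, l i * (s i - s₀) ∈ AddSubgroup.closure ((fun s => s - s₀) '' S) := by
      refine AddSubgroup.sum_mem _ fun i _ => ?_
      rw [← smul_eq_mul]
      exact AddSubgroup.zsmul_mem _ (AddSubgroup.subset_closure (Set.mem_image_of_mem _ (hs i))) _
    have h := add_mem_of_mem_closure_differences hSC hC hs₀ ht
    convert h using 1
    simp only [mul_sub, Finset.sum_sub_distrib, ← Finset.sum_mul, hl]
    ring
end
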